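/- Let k be any field and R = k[t,u,x,y]/(xy − tu − 1) the coordinate ring of SL₂. Then R is an integral domain which is a unique factorisation domain, and the group of units of R is exactly the image of k* (i.e., R* = k*). -/

import Mathlib

open MvPolynomial

noncomputable section

/-- The polynomial `x*y - t*u - 1` defining `SL₂` inside `𝔸⁴ = Spec k[t,u,x,y]`
(variables: `0 = t`, `1 = u`, `2 = x`, `3 = y`). -/
def sl2Rel (k : Type*) [Field k] : MvPolynomial (Fin 4) k := X 2 * X 3 - X 0 * X 1 - 1

/-- The coordinate ring `R = k[t,u,x,y]/(xy - tu - 1)` of `SL₂`. -/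
abbrev SL2Ring (k : Type*) [Field k] : Type _ := MvPolynomial (Fin 4) k ⧸ Ideal.span {sl2Rel k}

theorem sl2_cancel {Q : Type*} [CommRing Q] {a b c : Q} (h : a * b = -1) (n : ℕ)
    (hc : a ^ n * c = 0) : c = 0 := by
  have h1 : (-b) ^ n * a ^ n = 1 := by
    rw [← mul_pow, show -b * a = 1 by linear_combination -h, one_pow]
  calc c = (-b) ^ n * (a ^ n * c) := by rw [← mul_assoc, h1, one_mul]
    _ = 0 := by rw [hc, mul_zero]

theorem sl2_clear {k A Q σ : Type*} [Field k] [CommRing A] [Algebra k A] [CommRing Q] [Algebra k Q]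
    (p : MvPolynomial σ k →ₐ[k] Q) (i : A →ₐ[k] Q) (s : A)
    (h : ∀ j, ∃ (n : ℕ) (a : A), i s ^ n * p (X j) = i a) (f : MvPolynomial σ k) :
    ∃ (n : ℕ) (a : A), i s ^ n * p f = i a := by
  induction f using MvPolynomial.induction_on with
  | C c =>
    refine ⟨0, algebraMap k A c, ?_⟩
    rw [AlgHom.commutes, pow_zero, one_mul, ← MvPolynomial.algebraMap_eq, AlgHom.commutes]
  | add f g hf hg =>
    obtain ⟨n, a, hn⟩ := hf
    obtain ⟨m, b, hm⟩ := hg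
    refine ⟨n + m, s ^ m * a + s ^ n * b, ?_⟩
    simp only [map_add, map_mul, map_pow, ← hn, ← hm]
    ring
  | mul_X f j hf =>
    obtain ⟨n, a, hn⟩ := hf
    obtain ⟨m, b, hm⟩ := h j
    refine ⟨n + m, a * b, ?_⟩
    simp only [map_mul, ← hn, ← hm]
    ring

/-- Nagata's criterion, in a concrete form. -/
theorem sl2_nagata {A R : Type*} [CommRing A] [IsDomain A] [UniqueFactorizationMonoid A]
    [CommRing R] [IsDomain R] [IsNoetherianRing R] (i : A →+* R) (hi : Function.Injective i)
    (s : A) (hs : Prime (i s)) (h : ∀ r, ∃ (n : ℕ) (a : A), i s ^ n * r = i a) :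
    UniqueFactorizationMonoid R := by
  rw [UniqueFactorizationMonoid.iff_exists_prime_mem_of_isPrime]
  intro P hP hPp
  by_cases hsP : i s ∈ P
  · exact ⟨_, hsP, hs⟩
  have hne : P.comap i ≠ ⊥ := by
    obtain ⟨f, hf, hf0⟩ := Submodule.exists_mem_ne_zero_of_ne_bot hP
    obtain ⟨n, a, ha⟩ := h f
    intro hb
    have ham : a ∈ P.comap i := by
      rw [Ideal.mem_comap, ← ha]
      exact P.mul_mem_left _ hf
    rw [hb, Ideal.mem_bot] at ham
    rw [ham, map_zero] at ha
    exact mul_ne_zero (pow_ne_zero n hs.ne_zero) hf0 ha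
  obtain ⟨a, haP, ha⟩ := (hPp.comap i).exists_mem_prime_of_ne_bot hne
  have hia : i a ≠ 0 := by
    rw [Ne, map_eq_zero_iff i hi]; exact ha.ne_zero
  have has : ∀ n, ¬ a ∣ s ^ n := fun n hd => by
    obtain ⟨c, hc⟩ := ha.dvd_of_dvd_pow hd
    apply hsP
    rw [hc, map_mul]
    exact P.mul_mem_right _ haP
  obtain ⟨N, q, hq, haq⟩ := (FiniteMultiplicity.of_not_isUnit hs.not_isUnit hia).exists_eq_pow_mul_and_not_dvd
    |> fun ⟨c, hc, hd⟩ => (⟨_, c, hd, hc⟩ : ∃ (N : ℕ) (c : R), ¬ i s ∣ c ∧ i a = i s ^ N * c)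
  have hqP : q ∈ P := by
    have h1 : i a ∈ P := haP
    rw [haq] at h1
    exact (hPp.mem_or_mem h1).resolve_left fun h2 => hsP (hPp.mem_of_pow_mem _ h2)
  have key : ∀ n r, q ∣ i s ^ n * r → q ∣ r := by
    rintro n r ⟨c, hc⟩
    have : i s ^ n ∣ c := by
      refine (hs.pow_dvd_of_dvd_mul_left n hq ?_)
      exact ⟨r, hc.symm⟩
    obtain ⟨d, rfl⟩ := this
    refine ⟨d, mul_left_cancel₀ (pow_ne_zero n hs.ne_zero) ?_⟩
    rw [hc]; ring
  refine ⟨q, hqP, ?_, ?_, ?_⟩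
  · rintro rfl
    simp at hq
  · exact fun hu => hPp.ne_top (P.eq_top_of_isUnit_mem hqP hu)
  · rintro r r' ⟨w, hw⟩
    obtain ⟨n, b, hb⟩ := h r
    obtain ⟨m, b', hb'⟩ := h r'
    obtain ⟨l, c, hc⟩ := h w
    have hA : a * (s ^ (n + m) * c) = s ^ (N + l) * (b * b') := by
      apply hi
      simp only [map_mul, map_pow, ← hb, ← hb', ← hc, haq]
      linear_combination - (i s) ^ (n + m + N + l) * hw
    have hqa : q ∣ i a := ⟨i s ^ N, by rw [haq]; ring⟩
    rcases ha.dvd_or_dvd (⟨_, hA.symm⟩ : a ∣ s ^ (N + l) * (b * b')) with h1 | h1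
    · exact absurd h1 (has _)
    rcases ha.dvd_or_dvd h1 with h1 | h1
    · left
      apply key n
      rw [hb]
      exact hqa.trans (map_dvd i h1)
    · right
      apply key m
      rw [hb']
      exact hqa.trans (map_dvd i h1)

/-- The image of the polynomial ring `k[t,u,x]` in the coordinate ring. -/
def sl2Incl (k : Type*) [Field k] : MvPolynomial (Fin 3) k →ₐ[k] SL2Ring k :=
  (Ideal.Quotient.mkₐ k (Ideal.span {sl2Rel k})).comp (aeval ![X 0, X 1, X 2])

theorem sl2_rel_eq (k : Type*) [Field k] :
    (Ideal.Quotient.mk (Ideal.span {sl2Rel k}) (X 2)) * (Ideal.Quotient.mk _ (X 3)) =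
    (Ideal.Quotient.mk (Ideal.span {sl2Rel k}) (X 0)) * (Ideal.Quotient.mk _ (X 1)) + 1 := by
  have h : Ideal.Quotient.mk (Ideal.span {sl2Rel k}) (X 2 * X 3 - X 0 * X 1 - 1) = 0 :=
    Ideal.Quotient.eq_zero_iff_mem.2 (Ideal.mem_span_singleton_self (sl2Rel k))
  rw [map_sub, map_sub, map_mul, map_mul, map_one] at h
  linear_combination h

theorem sl2_incl_clear (k : Type*) [Field k] (r : SL2Ring k) :
    ∃ (n : ℕ) (a : MvPolynomial (Fin 3) k), sl2Incl k (X 2) ^ n * r = sl2Incl k a := by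
  obtain ⟨f, rfl⟩ := Ideal.Quotient.mk_surjective r
  refine sl2_clear (Ideal.Quotient.mkₐ k (Ideal.span {sl2Rel k})) (sl2Incl k) (X 2) ?_ f
  intro j
  fin_cases j
  · exact ⟨0, X 0, by simp [sl2Incl]⟩
  · exact ⟨0, X 1, by simp [sl2Incl]⟩
  · exact ⟨0, X 2, by simp [sl2Incl]⟩
  · exact ⟨1, X 0 * X 1 + 1, by simpa [sl2Incl] using sl2_rel_eq k⟩

theorem sl2_x_nzd (k : Type*) [Field k] (r : SL2Ring k) (h : sl2Incl k (X 2) * r = 0) : r = 0 := by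
  obtain ⟨f, rfl⟩ := Ideal.Quotient.mk_surjective r
  have h' : Ideal.Quotient.mk (Ideal.span {sl2Rel k}) (X 2 * f) = 0 := by
    rw [map_mul]; simpa [sl2Incl] using h
  rw [Ideal.Quotient.eq_zero_iff_mem, Ideal.mem_span_singleton] at h' ⊢
  obtain ⟨g, hg⟩ := h'
  have hp : Prime (X 2 : MvPolynomial (Fin 4) k) := X_prime
  rcases hp.dvd_or_dvd (⟨f, hg.symm⟩ : X 2 ∣ sl2Rel k * g) with ⟨c, hc⟩ | ⟨c, rfl⟩
  · have := congrArg (MvPolynomial.eval (fun _ => (0 : k))) hc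
    simp [sl2Rel] at this
  · refine ⟨c, mul_left_cancel₀ hp.ne_zero ?_⟩
    rw [hg]; ring

/-- The map to the fraction field of `k[t,u,x]`. -/
def sl2ToFrac (k : Type*) [Field k] :
    SL2Ring k →ₐ[k] FractionRing (MvPolynomial (Fin 3) k) :=
  Ideal.Quotient.liftₐ (Ideal.span {sl2Rel k})
    (aeval ![algebraMap (MvPolynomial (Fin 3) k) _ (X 0), algebraMap (MvPolynomial (Fin 3) k) _ (X 1),
      algebraMap (MvPolynomial (Fin 3) k) _ (X 2),
      (algebraMap (MvPolynomial (Fin 3) k) _ (X 0 * X 1 + 1)) /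
        algebraMap (MvPolynomial (Fin 3) k) _ (X 2)]) (by
      have hx : algebraMap (MvPolynomial (Fin 3) k) (FractionRing (MvPolynomial (Fin 3) k)) (X 2)
        ≠ 0 := by
        rw [Ne, FaithfulSMul.algebraMap_eq_zero_iff]; exact X_ne_zero _
      intro a ha
      obtain ⟨c, rfl⟩ := Ideal.mem_span_singleton.1 ha
      rw [map_mul]
      convert zero_mul _
      simp only [sl2Rel, map_sub, map_mul, map_one, aeval_X]
      simp [mul_div_cancel₀ _ hx])

theorem sl2ToFrac_mk (k : Type*) [Field k] (f : MvPolynomial (Fin 4) k) :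
    sl2ToFrac k (Ideal.Quotient.mk (Ideal.span {sl2Rel k}) f) = aeval
    ![algebraMap (MvPolynomial (Fin 3) k) _ (X 0), algebraMap (MvPolynomial (Fin 3) k) _ (X 1),
      algebraMap (MvPolynomial (Fin 3) k) _ (X 2),
      (algebraMap (MvPolynomial (Fin 3) k) (FractionRing (MvPolynomial (Fin 3) k)) (X 0 * X 1 + 1)) /
        algebraMap (MvPolynomial (Fin 3) k) _ (X 2)] f := rfl

theorem sl2ToFrac_incl (k : Type*) [Field k] (a : MvPolynomial (Fin 3) k) :
    sl2ToFrac k (sl2Incl k a) = algebraMap _ _ a := by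
  have : (sl2ToFrac k).comp (sl2Incl k) = IsScalarTower.toAlgHom k (MvPolynomial (Fin 3) k) _ := by
    apply MvPolynomial.algHom_ext
    intro j
    fin_cases j <;> simp [sl2Incl, sl2ToFrac_mk]
  exact DFunLike.congr_fun this a

theorem sl2Incl_injective (k : Type*) [Field k] : Function.Injective (sl2Incl k) := by
  intro a b h
  have := congrArg (sl2ToFrac k) h
  rw [sl2ToFrac_incl, sl2ToFrac_incl] at this
  exact FaithfulSMul.algebraMap_injective _ _ this

theorem sl2_isDomain (k : Type*) [Field k] : IsDomain (SL2Ring k) := by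
  have hinj : Function.Injective (sl2ToFrac k) := by
    rw [injective_iff_map_eq_zero]
    intro r hr
    obtain ⟨n, a, ha⟩ := sl2_incl_clear k r
    have h1 := congrArg (sl2ToFrac k) ha
    rw [map_mul, hr, mul_zero, sl2ToFrac_incl, eq_comm, FaithfulSMul.algebraMap_eq_zero_iff] at h1
    rw [h1, map_zero] at ha
    induction n with
    | zero => simpa using ha
    | succ n ih =>
      apply ih
      apply sl2_x_nzd
      rw [← ha]; ring
  exact hinj.isDomain (sl2ToFrac k).toRingHom

/-- The map to the fraction field of `k[t,y]` with kernel `(x)`. -/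
def sl2ToFrac' (k : Type*) [Field k] :
    SL2Ring k →ₐ[k] FractionRing (MvPolynomial (Fin 2) k) :=
  Ideal.Quotient.liftₐ (Ideal.span {sl2Rel k})
    (aeval ![algebraMap (MvPolynomial (Fin 2) k) _ (X 0),
      - (algebraMap (MvPolynomial (Fin 2) k) _ (X 0))⁻¹, 0,
      algebraMap (MvPolynomial (Fin 2) k) _ (X 1)]) (by
      have hx : algebraMap (MvPolynomial (Fin 2) k) (FractionRing (MvPolynomial (Fin 2) k)) (X 0)
        ≠ 0 := by
        rw [Ne, FaithfulSMul.algebraMap_eq_zero_iff]; exact X_ne_zero _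
      intro a ha
      obtain ⟨c, rfl⟩ := Ideal.mem_span_singleton.1 ha
      rw [map_mul]
      convert zero_mul _
      simp only [sl2Rel, map_sub, map_mul, map_one, aeval_X]
      simp [hx])

theorem sl2ToFrac'_mk (k : Type*) [Field k] (f : MvPolynomial (Fin 4) k) :
    sl2ToFrac' k (Ideal.Quotient.mk (Ideal.span {sl2Rel k}) f) = aeval
    ![algebraMap (MvPolynomial (Fin 2) k) (FractionRing (MvPolynomial (Fin 2) k)) (X 0),
      - (algebraMap (MvPolynomial (Fin 2) k) _ (X 0))⁻¹, 0,
      algebraMap (MvPolynomial (Fin 2) k) _ (X 1)] f := rfl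

theorem sl2_x_dvd_iff (k : Type*) [Field k] (r : SL2Ring k) :
    sl2Incl k (X 2) ∣ r ↔ sl2ToFrac' k r = 0 := by
  constructor
  · rintro ⟨c, rfl⟩
    simp [sl2Incl, sl2ToFrac'_mk]
  · intro hr
    let J : Ideal (SL2Ring k) := Ideal.span {sl2Incl k (X 2)}
    let i : MvPolynomial (Fin 2) k →ₐ[k] SL2Ring k :=
      (Ideal.Quotient.mkₐ k (Ideal.span {sl2Rel k})).comp (aeval ![X 0, X 3])
    let p := Ideal.Quotient.mkₐ k J
    have hx : p (sl2Incl k (X 2)) = 0 :=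
      Ideal.Quotient.eq_zero_iff_mem.2 (Ideal.mem_span_singleton_self _)
    have hx' : p (Ideal.Quotient.mk (Ideal.span {sl2Rel k}) (X 2)) = 0 := by
      simpa [sl2Incl] using hx
    have htu : p (Ideal.Quotient.mk (Ideal.span {sl2Rel k}) (X 0)) *
        p (Ideal.Quotient.mk (Ideal.span {sl2Rel k}) (X 1)) = -1 := by
      have := congrArg p (sl2_rel_eq k)
      rw [map_mul, hx', map_add, map_mul, map_one] at this
      linear_combination -this
    have hi0 : i (X 0) = Ideal.Quotient.mk (Ideal.span {sl2Rel k}) (X 0) := by simp [i]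
    have hi1 : i (X 1) = Ideal.Quotient.mk (Ideal.span {sl2Rel k}) (X 3) := by simp [i]
    obtain ⟨f, rfl⟩ := Ideal.Quotient.mk_surjective r
    have hgen : ∀ j : Fin 4, ∃ (n : ℕ) (a : MvPolynomial (Fin 2) k),
        (p.comp i) (X 0) ^ n *
          (p.comp (Ideal.Quotient.mkₐ k (Ideal.span {sl2Rel k}))) (X j) = (p.comp i) a := by
      intro j
      fin_cases j
      · exact ⟨0, X 0, by simp [hi0]⟩
      · exact ⟨1, -1, by simpa [hi0] using htu⟩
      · exact ⟨0, 0, by simpa using hx'⟩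
      · exact ⟨0, X 1, by simp [hi1]⟩
    obtain ⟨n, a, ha⟩ := sl2_clear (k := k) (A := MvPolynomial (Fin 2) k)
      (Q := SL2Ring k ⧸ J) (p.comp (Ideal.Quotient.mkₐ k (Ideal.span {sl2Rel k})))
      (p.comp i) (X 0) hgen f
    have hdvd : sl2Incl k (X 2) ∣ i (X 0) ^ n * Ideal.Quotient.mk _ f - i a := by
      rw [← Ideal.mem_span_singleton, ← Ideal.Quotient.eq_zero_iff_mem, map_sub, sub_eq_zero,
        map_mul, map_pow]
      exact ha
    have hcomp : ∀ b, sl2ToFrac' k (i b) = algebraMap _ _ b := by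
      have : (sl2ToFrac' k).comp i = IsScalarTower.toAlgHom k (MvPolynomial (Fin 2) k) _ := by
        apply MvPolynomial.algHom_ext
        intro j
        fin_cases j <;> simp [i, sl2ToFrac'_mk]
      exact fun b => DFunLike.congr_fun this b
    have ha0 : a = 0 := by
      obtain ⟨c, hc⟩ := hdvd
      have h1 := congrArg (sl2ToFrac' k) hc
      have h2 : sl2ToFrac' k (sl2Incl k (X 2)) = 0 := by simp [sl2Incl, sl2ToFrac'_mk]
      rw [map_sub, map_mul, hr, map_mul, h2, hcomp, mul_zero, zero_mul, zero_sub, neg_eq_zero,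
        FaithfulSMul.algebraMap_eq_zero_iff] at h1
      exact h1
    rw [ha0, map_zero] at ha
    have ha' : p ((Ideal.Quotient.mk (Ideal.span {sl2Rel k})) f) = 0 := by
      rw [AlgHom.comp_apply, hi0] at ha
      exact sl2_cancel (Q := SL2Ring k ⧸ J) htu n ha
    rw [← Ideal.mem_span_singleton, ← Ideal.Quotient.eq_zero_iff_mem]
    exact ha'

theorem sl2_x_prime (k : Type*) [Field k] : Prime (sl2Incl k (X 2)) := by
  refine ⟨?_, ?_, ?_⟩
  · rw [Ne, map_eq_zero_iff _ (sl2Incl_injective k)]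
    exact X_ne_zero _
  · rw [isUnit_iff_dvd_one, sl2_x_dvd_iff, map_one]
    exact one_ne_zero
  · intro a b
    simp only [sl2_x_dvd_iff, map_mul, mul_eq_zero]
    exact id

theorem sl2_units (k : Type*) [Field k] (r : SL2Ring k) :
    IsUnit r ↔ ∃ c : k, c ≠ 0 ∧ algebraMap k (SL2Ring k) c = r := by
  have := sl2_isDomain k
  constructor
  · intro hr
    obtain ⟨r', hr'⟩ := hr.exists_right_inv
    obtain ⟨n, a, ha⟩ := sl2_incl_clear k r
    obtain ⟨m, b, hb⟩ := sl2_incl_clear k r'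
    have hx := sl2_x_prime k
    have hab : a * b = X 2 ^ (n + m) := by
      apply sl2Incl_injective k
      rw [map_mul, map_pow, ← ha, ← hb]
      linear_combination sl2Incl k (X 2) ^ (n + m) * hr'
    have hX : Prime (X 2 : MvPolynomial (Fin 3) k) := X_prime
    obtain ⟨j, -, hj⟩ := (dvd_prime_pow hX (n + m)).1 ⟨b, hab.symm⟩
    obtain ⟨v, hv⟩ := hj.symm
    obtain ⟨c, hc, hcv⟩ := isUnit_iff_eq_C_of_isReduced.1 v.isUnit
    have hc0 : c ≠ 0 := hc.ne_zero
    have hvR : sl2Incl k v = algebraMap k _ c := by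
      rw [hcv, ← MvPolynomial.algebraMap_eq, AlgHom.commutes]
    have hcu : IsUnit (algebraMap k (SL2Ring k) c) := hc.map _
    rw [← hv, map_mul, map_pow, hvR] at ha
    refine ⟨c, hc0, ?_⟩
    rcases lt_trichotomy n j with h | h | h
    · exfalso
      obtain ⟨d, rfl⟩ := Nat.exists_eq_add_of_lt h
      have : r = sl2Incl k (X 2) * (sl2Incl k (X 2) ^ d * algebraMap k _ c) :=
        mul_left_cancel₀ (pow_ne_zero n hx.ne_zero) (by rw [ha]; ring)
      exact hx.not_isUnit (isUnit_of_mul_isUnit_left (this ▸ hr))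
    · subst h
      exact (mul_left_cancel₀ (pow_ne_zero n hx.ne_zero) ha).symm
    · exfalso
      obtain ⟨d, rfl⟩ := Nat.exists_eq_add_of_lt h
      have : algebraMap k _ c = sl2Incl k (X 2) * (sl2Incl k (X 2) ^ d * r) :=
        mul_left_cancel₀ (pow_ne_zero j hx.ne_zero) (by rw [← ha]; ring)
      exact hx.not_isUnit (isUnit_of_mul_isUnit_left (this ▸ hcu))
  · rintro ⟨c, hc, rfl⟩
    exact (isUnit_iff_ne_zero.2 hc).map _

/-- **Lemma 4.3 (Blanc–van Santen).** The coordinate ring `R = k[t,u,x,y]/(xy − tu − 1)` of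
`SL₂` is an integral domain which is a unique factorisation domain, and its units are exactly
the images of the nonzero elements of `k`. -/
theorem SL2Ring_isUFD_and_units (k : Type*) [Field k] :
    ∃ hd : IsDomain (SL2Ring k),
      (letI := hd; UniqueFactorizationMonoid (SL2Ring k)) ∧
      (∀ r : SL2Ring k, IsUnit r ↔ ∃ c : k, c ≠ 0 ∧ algebraMap k (SL2Ring k) c = r) := by
  have := sl2_isDomain k
  exact ⟨this, sl2_nagata (sl2Incl k).toRingHom (sl2Incl_injective k) (X 2) (sl2_x_prime k)
    (sl2_incl_clear k), sl2_units k⟩
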